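/- Let m ≥ 1 and let a^{(1)}, ..., a^{(m)} : ℕ → ℤ be integer sequences that are simultaneously eventually periodic, i.e., there exist N ≥ 0 and q ≥ 1 such that a^{(j)}_{n+q} = a^{(j)}_n for all n ≥ N and all j = 1, ..., m. Then there exist k ≥ 1, integers c_1, ..., c_k, and N' ≥ 0 such that for every i = 1, ..., m+1 and every n ≥ N', the convergent sequence satisfies A^{(i)}_{n+k} = c_1·A^{(i)}_{n+k-1} + ⋯ + c_k·A^{(i)}_n. In particular, each sequence (A^{(i)}_n) is a linear recurrence sequence. -/

import Mathlib

/-- The convergent numerator/denominator sequences `A⁽ⁱ⁾` of a multidimensional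
continued fraction with partial quotient sequences `a⁽¹⁾, …, a⁽ᵐ⁾`, with the
index shifted by `m`:  `convA m a i n` is `A⁽ⁱ⁺¹⁾_{n - m}` of the paper. -/
def convA (m : ℕ) (a : Fin m → ℕ → ℤ) (i : Fin (m + 1)) : ℕ → ℤ
  | n =>
    if h : n ≤ m then
      if n = m then
        if hi : (i : ℕ) < m then a ⟨i, hi⟩ 0 else 1
      else
        if (i : ℕ) = m then 0 else if n = m - 1 - (i : ℕ) then 1 else 0
    else
      (∑ j : Fin m, a j (n - m) * convA m a i (n - ((j : ℕ) + 1))) +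
        convA m a i (n - (m + 1))
  termination_by n => n
  decreasing_by all_goals omega

/-!
The convergents solve a recurrence of order `d = m + 1` whose coefficients are eventually periodic.
On windows of `d` consecutive terms such a recurrence is a linear system `x (n + 1) = C n (x n)`,
where `C` has period `q`. Thus `x n = Φ n (x 0)` with `Φ n = C (n - 1) * ⋯ * C 0`, and periodicity
gives Floquet's identity `Φ (n + q) = Φ n * Φ q`. Hence `x (n + k * q) = Φ n (Φ q ^ k (x 0))`, and
Cayley–Hamilton for the monodromy `Φ q` yields a constant-coefficient recurrence in `k` that is the
same for every `n` and every solution.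
-/

open Function Module

section Evolution

variable {M : Type*} [Monoid M] {C : ℕ → M} {q : ℕ}

/-- The fundamental solution `C (n - 1) * ⋯ * C 0` of the system `x (n + 1) = C n • x n`. When `C`
has period `q`, its value at `q` is the monodromy of the system. -/
def evolution (C : ℕ → M) : ℕ → M
  | 0 => 1
  | n + 1 => C n * evolution C n

theorem evolution_add_period (hC : Periodic C q) (n : ℕ) :
    evolution C (n + q) = evolution C n * evolution C q := by
  induction n with
  | zero => rw [zero_add, evolution, one_mul]
  | succ n ih => rw [Nat.add_right_comm, evolution, evolution, hC n, ih, mul_assoc]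

theorem evolution_add_mul_period (hC : Periodic C q) (n k : ℕ) :
    evolution C (n + k * q) = evolution C n * evolution C q ^ k := by
  induction k with
  | zero => rw [zero_mul, add_zero, pow_zero, mul_one]
  | succ k ih =>
    rw [Nat.succ_mul, ← add_assoc, evolution_add_period hC, ih, mul_assoc, pow_succ]

theorem eq_evolution_smul {X : Type*} [MulAction M X] {x : ℕ → X}
    (hx : ∀ n, x (n + 1) = C n • x n) (n : ℕ) : x n = evolution C n • x 0 := by
  induction n with
  | zero => rw [evolution, one_smul]
  | succ n ih => rw [hx, ih, evolution, mul_smul]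

end Evolution

section CharpolyRecurrence

variable {R V : Type*} [CommRing R] [AddCommGroup V] [Module R V] [Module.Free R V]
  [Module.Finite R V]

/-- The linear recurrence with constant coefficients whose characteristic polynomial is that of
the endomorphism `f`. -/
noncomputable def charpolyRecurrence (f : End R V) : LinearRecurrence R where
  order := finrank R V
  coeffs i := -f.charpoly.coeff i

theorem isSolution_charpolyRecurrence (f : End R V) (ℓ : V →ₗ[R] R) (v : V) :
    (charpolyRecurrence f).IsSolution fun k => ℓ ((f ^ k) v) := by
  intro n
  nontriviality R
  have cayley_hamilton : ∑ i ∈ Finset.range (finrank R V), f.charpoly.coeff i • f ^ i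
      + f ^ finrank R V = 0 := by
    have h := f.aeval_self_charpoly
    rwa [Polynomial.aeval_eq_sum_range, Finset.sum_range_succ, f.charpoly_monic.coeff_natDegree,
      one_smul, f.charpoly_natDegree] at h
  have h := congrArg ℓ (LinearMap.congr_fun cayley_hamilton ((f ^ n) v))
  simp only [LinearMap.add_apply, LinearMap.sum_apply, LinearMap.smul_apply, map_add, map_sum,
    map_smul, ← End.mul_apply, ← pow_add, smul_eq_mul, LinearMap.zero_apply, map_zero] at h
  change ℓ ((f ^ (n + finrank R V)) v) =
    ∑ i : Fin (finrank R V), -f.charpoly.coeff i * ℓ ((f ^ (n + i)) v)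
  simp only [neg_mul, Finset.sum_neg_distrib, add_comm n]
  rw [Fin.sum_univ_eq_sum_range fun i => f.charpoly.coeff i * ℓ ((f ^ (i + n)) v)]
  exact eq_neg_of_add_eq_zero_right h

end CharpolyRecurrence

section DilateRecurrence

variable {R : Type*} [CommSemiring R]

/-- The recurrence that imposes `E` along every residue class modulo `q`; its characteristic
polynomial is that of `E` evaluated at `X ^ q`. `finProdFinEquiv` splits an index as `r + q * k`. -/
def dilateRecurrence (q : ℕ) (E : LinearRecurrence R) : LinearRecurrence R where
  order := E.order * q
  coeffs i :=
    if ((finProdFinEquiv.symm i).2 : ℕ) = 0 then E.coeffs (finProdFinEquiv.symm i).1 else 0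

theorem sum_dilateRecurrence_coeffs_mul {q : ℕ} [NeZero q] (E : LinearRecurrence R) (u : ℕ → R) :
    ∑ i, (dilateRecurrence q E).coeffs i * u i = ∑ k, E.coeffs k * u (k * q) := by
  change ∑ i : Fin (E.order * q), (if ((finProdFinEquiv.symm i).2 : ℕ) = 0 then
    E.coeffs (finProdFinEquiv.symm i).1 else 0) * u i = _
  rw [← Equiv.sum_comp finProdFinEquiv, Fintype.sum_prod_type]
  simp only [Equiv.symm_apply_apply, finProdFinEquiv_apply_val, Fin.val_eq_zero_iff, ite_mul,
    zero_mul, Finset.sum_ite_eq', Finset.mem_univ, if_true, Fin.val_zero, zero_add, mul_comm q]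

theorem isSolution_dilateRecurrence_iff {q : ℕ} [NeZero q] {E : LinearRecurrence R} {u : ℕ → R} :
    (dilateRecurrence q E).IsSolution u ↔ ∀ n, E.IsSolution fun k => u (n + k * q) := by
  have recurrence_at (n : ℕ) :
      u (n + (dilateRecurrence q E).order) = ∑ i, (dilateRecurrence q E).coeffs i * u (n + i) ↔
      u (n + E.order * q) = ∑ k, E.coeffs k * u (n + k * q) := by
    rw [sum_dilateRecurrence_coeffs_mul E fun i => u (n + i), dilateRecurrence]
  simp only [LinearRecurrence.IsSolution, recurrence_at, add_mul, ← add_assoc]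
  exact ⟨fun h n k => h (n + k * q), fun h n => by simpa only [zero_mul, add_zero] using h n 0⟩

end DilateRecurrence

theorem eq_sum_coeffs_rev_of_isSolution {R : Type*} [CommSemiring R] {E : LinearRecurrence R}
    {u : ℕ → R} (hu : E.IsSolution u) (n : ℕ) :
    u (n + E.order) = ∑ t : Fin E.order, E.coeffs t.rev * u (n + (E.order - 1 - t)) := by
  rw [hu n, ← Equiv.sum_comp Fin.revPerm]
  simp only [Fin.revPerm_apply, Fin.val_rev, Nat.sub_sub, add_comm 1]

section PeriodicRecurrence

variable {R : Type*} [CommSemiring R] {d q : ℕ} {b : ℕ → Fin d → R} {s : ℕ → R}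

/-- `LinearRecurrence.tupleSucc` for the recurrence with coefficients `c`, viewed as an
endomorphism so that it can be composed. -/
def companionMap (c : Fin d → R) : End R (Fin d → R) :=
  (LinearRecurrence.mk d c).tupleSucc

/-- The `d` terms of `s` starting at index `n`. -/
def window {α : Type*} (d : ℕ) (s : ℕ → α) (n : ℕ) : Fin d → α :=
  fun i => s (n + i)

/-- The product of the companion maps of the recurrence with coefficients `b n` over the indices
`n < q`; it takes the first `d` terms of a solution to the `d` terms starting at index `q`. -/
def monodromy (b : ℕ → Fin d → R) (q : ℕ) : End R (Fin d → R) :=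
  evolution (fun n => companionMap (b n)) q

theorem window_succ {c : Fin d → R} {n : ℕ} (hs : s (n + d) = ∑ i, c i * s (n + i)) :
    window d s (n + 1) = companionMap c (window d s n) := by
  ext i
  simp only [window, companionMap, LinearRecurrence.tupleSucc, LinearMap.coe_mk, AddHom.coe_mk]
  split_ifs with h
  · rw [add_assoc, add_comm 1]
  · rw [← hs, add_assoc, show 1 + (i : ℕ) = d by omega]

theorem window_add_mul_period (hb : Periodic b q) (hs : ∀ n, s (n + d) = ∑ i, b n i * s (n + i))
    (n k : ℕ) :
    window d s (n + k * q) =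
      evolution (fun n => companionMap (b n)) n ((monodromy b q ^ k) (window d s 0)) := by
  have companionMap_periodic : Periodic (fun n => companionMap (b n)) q := hb.comp companionMap
  have window_succ_eq (n : ℕ) :
      window d s (n + 1) = companionMap (b n) • window d s n := window_succ (hs n)
  calc window d s (n + k * q)
      = evolution (fun n => companionMap (b n)) (n + k * q) • window d s 0 :=
        eq_evolution_smul window_succ_eq _
    _ = (evolution (fun n => companionMap (b n)) n * monodromy b q ^ k) • window d s 0 := by
        rw [evolution_add_mul_period companionMap_periodic, monodromy]
    _ = evolution (fun n => companionMap (b n)) n ((monodromy b q ^ k) (window d s 0)) := rfl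

end PeriodicRecurrence

theorem isSolution_dilateRecurrence_monodromy {R : Type*} [CommRing R] {d q : ℕ} [NeZero q]
    {b : ℕ → Fin d → R} (hb : Periodic b q) {s : ℕ → R}
    (hs : ∀ n, s (n + d) = ∑ i, b n i * s (n + i)) :
    (dilateRecurrence q (charpolyRecurrence (monodromy b q))).IsSolution s := by
  rw [isSolution_dilateRecurrence_iff]
  intro n
  obtain rfl | hd := d.eq_zero_or_pos
  · obtain rfl : s = 0 := funext fun n => by simpa using hs n
    exact (charpolyRecurrence (monodromy b q)).solSpace.zero_mem
  let ℓ : (Fin d → R) →ₗ[R] R :=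
    LinearMap.proj ⟨0, hd⟩ ∘ₗ evolution (fun n => companionMap (b n)) n
  have s_eq (k : ℕ) : s (n + k * q) = ℓ ((monodromy b q ^ k) (window d s 0)) :=
    congrFun (window_add_mul_period hb hs n k) ⟨0, hd⟩
  simpa only [s_eq] using isSolution_charpolyRecurrence (monodromy b q) ℓ (window d s 0)

/-- The coefficients of the recurrence solved by `convA m a i` from index `n` on, listed by
increasing index of the term they multiply. -/
def convCoeffs (m : ℕ) (a : Fin m → ℕ → ℤ) (n : ℕ) : Fin (m + 1) → ℤ :=
  Fin.cons 1 fun j => a j.rev (n + 1)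

theorem convCoeffs_periodic {m N q : ℕ} {a : Fin m → ℕ → ℤ}
    (ha : ∀ j n, N ≤ n → a j (n + q) = a j n) :
    Periodic (fun n => convCoeffs m a (n + N)) q := by
  have ha_succ (j : Fin m) (n : ℕ) : a j (n + q + N + 1) = a j (n + N + 1) := by
    rw [show n + q + N + 1 = n + N + 1 + q by omega, ha j _ (by omega)]
  intro n
  simp only [convCoeffs, ha_succ]

theorem convA_add_order (m : ℕ) (a : Fin m → ℕ → ℤ) (i : Fin (m + 1)) (n : ℕ) :
    convA m a i (n + (m + 1)) = ∑ t, convCoeffs m a n t * convA m a i (n + t) := by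
  rw [convA, dif_neg (by omega), Fin.sum_univ_succ, add_comm, ← Equiv.sum_comp Fin.revPerm]
  simp only [convCoeffs, Fin.cons_zero, Fin.cons_succ, one_mul, Fin.val_zero, Fin.val_succ,
    Fin.revPerm_apply, Fin.val_rev, add_tsub_cancel_right, add_zero]
  congr! 4 <;> omega

/-- If the sequences of partial quotients of a multidimensional continued fraction
are (simultaneously eventually) periodic, then the numerators and denominators of
its convergents are linear recurrence sequences: there are `k ≥ 1`, integers
`c 0, …, c (k-1)` and an index `N'` such that for every `i` and all `n ≥ N'`,
`A⁽ⁱ⁾_{n+k} = c 0 • A⁽ⁱ⁾_{n+k-1} + ⋯ + c (k-1) • A⁽ⁱ⁾_n`. -/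
theorem convA_linear_recurrence_of_periodic (m : ℕ) (hm : 1 ≤ m) (a : Fin m → ℕ → ℤ)
    (N q : ℕ) (hq : 1 ≤ q) (hper : ∀ j : Fin m, ∀ n, N ≤ n → a j (n + q) = a j n) :
    ∃ k : ℕ, 1 ≤ k ∧ ∃ c : Fin k → ℤ, ∃ N' : ℕ,
      ∀ i : Fin (m + 1), ∀ n, N' ≤ n →
        convA m a i (n + k) = ∑ t : Fin k, c t * convA m a i (n + k - 1 - (t : ℕ)) := by
  have : NeZero q := ⟨by omega⟩
  let E := dilateRecurrence q
    (charpolyRecurrence (monodromy (fun n => convCoeffs m a (n + N)) q))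
  have E_isSolution (i : Fin (m + 1)) : E.IsSolution fun n => convA m a i (n + N) :=
    isSolution_dilateRecurrence_monodromy (convCoeffs_periodic hper) fun n => by
      simpa only [Nat.add_right_comm] using convA_add_order m a i (n + N)
  have order_eq : E.order = (m + 1) * q := congrArg (· * q) (finrank_fin_fun ℤ)
  have order_pos : 0 < E.order := order_eq ▸ by positivity
  refine ⟨E.order, order_pos, fun t => E.coeffs t.rev, N, fun i n hn => ?_⟩
  obtain ⟨n, rfl⟩ := Nat.exists_eq_add_of_le' hn
  rw [Nat.add_right_comm]
  refine (eq_sum_coeffs_rev_of_isSolution (E_isSolution i) n).trans ?_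
  congr! 3 with t
  omega
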